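/- For every ε > 0 there exists C_ε > 0 such that, uniformly in dyadic N, N₁, N₂, N₃ ≥ 1 and m ∈ ℤ, the operator norm of the base tensor h^{𝐍,(m)} viewed as a linear map from ℓ²(ℤ²) (variable n₁) to ℓ²((ℤ²)³) (variables (n, n₂, n₃)), i.e. the map sending f to (n, n₂, n₃) ↦ ∑_{n₁} h^{𝐍,(m)}(n, n₁, n₂, n₃) f(n₁), is at most C_ε · min( N₃ (min(N, N₂))^ε, (N N₂)^{1/2 + ε}, (N N₃)^{1/2 + ε}, (N₂ N₃)^{1/2 + ε} ). -/

import Mathlib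

/-- Euclidean norm of a lattice point in `ℤ²`. -/
noncomputable def znorm (n : ℤ × ℤ) : ℝ := Real.sqrt ((n.1 : ℝ) ^ 2 + (n.2 : ℝ) ^ 2)

/-- Squared Euclidean norm `|n|²` of `n ∈ ℤ²`, as an integer. -/
def nsq (n : ℤ × ℤ) : ℤ := n.1 ^ 2 + n.2 ^ 2

/-- `φ(n̄) = |n|² − |n₁|² + |n₂|² − |n₃|²`. -/
def phiFn (n n₁ n₂ n₃ : ℤ × ℤ) : ℤ := nsq n - nsq n₁ + nsq n₂ - nsq n₃

/-- `N` is a dyadic number: `N = 2^k` for some integer `k ≥ 0`. -/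
def IsDyadic (N : ℝ) : Prop := ∃ k : ℕ, N = 2 ^ k

/-- `|n| ∼ N`: for dyadic `N ≥ 2` this means `N/2 < |n| ≤ N`; for `N = 1` it means `|n| ≤ 1`. -/
def simDyadic (N : ℝ) (n : ℤ × ℤ) : Prop :=
  (N = 1 ∧ znorm n ≤ 1) ∨ (N ≠ 1 ∧ N / 2 < znorm n ∧ znorm n ≤ N)

/-- Membership in the set `S^{𝐍,(m)}`. -/
def SMem (N N₁ N₂ N₃ : ℝ) (m : ℤ) (n n₁ n₂ n₃ : ℤ × ℤ) : Prop :=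
  n = n₁ - n₂ + n₃ ∧ n ≠ n₁ ∧ n ≠ n₃ ∧ phiFn n n₁ n₂ n₃ = m ∧
    simDyadic N n ∧ simDyadic N₁ n₁ ∧ simDyadic N₂ n₂ ∧ simDyadic N₃ n₃ 

-- The base tensor `h^{𝐍,(m)}`: the `{0,1}`-valued indicator of `S^{𝐍,(m)}`.
open Classical in
noncomputable def hten (N N₁ N₂ N₃ : ℝ) (m : ℤ) (n n₁ n₂ n₃ : ℤ × ℤ) : ℝ :=
  if SMem N N₁ N₂ N₃ m n n₁ n₂ n₃ then 1 else 0

/-!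
Since the entries are `0` or `1` and the row `(n, n₂, n₃)` determines `n₁ = n + n₂ - n₃`, the square
of the operator norm is the maximum over `n₁` of the number of triples `(n, n₂, n₃)` in the support.
For such a triple `2 (n - n₁) · (n - n₃) = m`, which is used in two ways.

* Given `n₃`, the point `n` lies on the circle centred at `(n₁ + n₃) / 2` with
  `|2 n - n₁ - n₃|² = 2 m + |n₁ - n₃|²`.
* The nonzero vectors `u = n - n₁` and `v = n - n₃` have prescribed inner product; given one
  coordinate of each, the product of the two other coordinates is prescribed.

The circle is the hyperbola `z * conj z = D` in `ℤ[i]`, so both cases ask for the number of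
solutions of `x * y = M` with `x` and `y` in balls whose size does not depend on `M`. Three distinct
solutions satisfy `M * det ^ 2 = -∏ Δx * ∏ Δy`, where `det ≠ 0` is the determinant of the triangle
they form: either there are at most two solutions, or the norm of `M` is polynomial in the size of
the balls and the divisor bound applies.
-/

open Finset Real

/-! ### Counting in fibres and matrices with sparse rows -/

theorem card_le_card_mul_of_fiber {ι α β : Type*} {S : Finset ι} {t : Finset α} {f : ι → α}
    {g : ι → β} {c : ℝ} (hf : ∀ i ∈ S, f i ∈ t)
    (hfg : ∀ i ∈ S, ∀ j ∈ S, f i = f j → g i = g j → i = j)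
    (hc : ∀ a, ∀ T : Finset β, (∀ b ∈ T, ∃ i ∈ S, f i = a ∧ g i = b) → (#T : ℝ) ≤ c) :
    (#S : ℝ) ≤ #t * c := by
  classical
  have hfiber (a : α) : (#{i ∈ S | f i = a} : ℝ) ≤ c := by
    have hinj : Set.InjOn g ({i ∈ S | f i = a} : Finset ι) := by
      intro i hi j hj h
      rw [mem_coe, mem_filter] at hi hj
      exact hfg i hi.1 j hj.1 (hi.2.trans hj.2.symm) h
    rw [← card_image_of_injOn hinj]
    refine hc a _ fun b hb ↦ ?_
    obtain ⟨i, hi, rfl⟩ := mem_image.mp hb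
    exact ⟨i, (mem_filter.mp hi).1, (mem_filter.mp hi).2, rfl⟩
  calc (#S : ℝ) = ∑ a ∈ t, (#{i ∈ S | f i = a} : ℝ) :=
        mod_cast card_eq_sum_card_fiberwise (f := f) hf
    _ ≤ ∑ _a ∈ t, c := sum_le_sum fun a _ ↦ hfiber a
    _ = #t * c := by rw [sum_const, nsmul_eq_mul]

theorem sqrt_tsum_sq_le_of_row_unique {τ β : Type*} (h : τ → β → ℝ)
    (hrow : ∀ t x y, h t x ≠ 0 → h t y ≠ 0 → x = y) {K : ℝ} (hK : 0 ≤ K)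
    (hcol : ∀ x, ∀ T : Finset τ, ∑ t ∈ T, h t x ^ 2 ≤ K ^ 2) {f : β → ℝ}
    (hf : Summable fun x ↦ f x ^ 2) :
    √(∑' t, (∑' x, h t x * f x) ^ 2) ≤ K * √(∑' x, f x ^ 2) := by
  have hsingle (t : τ) : Summable (fun x ↦ h t x ^ 2 * f x ^ 2) ∧
      (∑' x, h t x * f x) ^ 2 = ∑' x, h t x ^ 2 * f x ^ 2 := by
    by_cases hzero : ∀ x, h t x = 0
    · simp [hzero, summable_zero]
    obtain ⟨x₀, hx₀⟩ := not_forall.mp hzero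
    have hother (x) (hx : x ≠ x₀) : h t x = 0 := by_contra fun h' ↦ hx (hrow t x x₀ h' hx₀)
    refine ⟨summable_of_ne_finset_zero (s := {x₀}) fun x hx ↦ ?_, ?_⟩
    · simp [hother x (by simpa using hx)]
    · rw [tsum_eq_single x₀ fun x hx ↦ by simp [hother x hx],
        tsum_eq_single x₀ fun x hx ↦ by simp [hother x hx], mul_pow]
  have hpartial (T : Finset τ) :
      ∑ t ∈ T, (∑' x, h t x * f x) ^ 2 ≤ K ^ 2 * ∑' x, f x ^ 2 := by
    calc ∑ t ∈ T, (∑' x, h t x * f x) ^ 2 = ∑' x, ∑ t ∈ T, h t x ^ 2 * f x ^ 2 := by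
          rw [Summable.tsum_finsetSum fun t _ ↦ (hsingle t).1]
          exact sum_congr rfl fun t _ ↦ (hsingle t).2
      _ ≤ ∑' x, K ^ 2 * f x ^ 2 := by
          refine (summable_sum fun t _ ↦ (hsingle t).1).tsum_le_tsum (fun x ↦ ?_) (hf.mul_left _)
          rw [← sum_mul]
          exact mul_le_mul_of_nonneg_right (hcol x T) (sq_nonneg _)
      _ = K ^ 2 * ∑' x, f x ^ 2 := tsum_mul_left
  calc √(∑' t, (∑' x, h t x * f x) ^ 2) ≤ √(K ^ 2 * ∑' x, f x ^ 2) :=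
        sqrt_le_sqrt (Real.tsum_le_of_sum_le (fun _ ↦ sq_nonneg _) hpartial)
    _ = K * √(∑' x, f x ^ 2) := by rw [sqrt_mul (sq_nonneg K), sqrt_sq hK]

/-! ### The divisor bound -/

section DivisorBound

variable {R : Type*} [CommMonoidWithZero R] [UniqueFactorizationMonoid R]

open UniqueFactorizationMonoid

theorem one_lt_of_northcott (N : R →* ℕ) [Northcott N] {a : R} (ha : a ≠ 0) (hu : ¬IsUnit a) :
    1 < N a := by
  by_contra! h
  have hpow (n : ℕ) : N (a ^ n) ≤ 1 := by
    rw [map_pow]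
    exact pow_le_one' h n
  exact Set.infinite_of_injective_forall_mem (pow_injective_of_not_isUnit hu ha) hpow
    (Northcott.finite_le 1)

theorem one_le_of_northcott (N : R →* ℕ) [Northcott N] {a : R} (ha : a ≠ 0) : 1 ≤ N a := by
  by_cases hu : IsUnit a
  · exact (Nat.isUnit_iff.mp (hu.map N)).ge
  · exact (one_lt_of_northcott N ha hu).le

theorem finite_units_of_northcott {M : Type*} [Monoid M] (N : M →* ℕ) [Northcott N] :
    Finite Mˣ := by
  have hunit (u : Mˣ) : N u ≤ 1 := (Nat.isUnit_iff.mp (u.isUnit.map N)).le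
  have : Finite {a | N a ≤ 1} := (Northcott.finite_le 1).to_subtype
  exact Finite.of_injective (fun u : Mˣ ↦ (⟨u, hunit u⟩ : {a | N a ≤ 1}))
    fun u v h ↦ Units.ext (Subtype.ext_iff.mp h)

theorem card_le_card_units_mul_prod_count_add_one [StrongNormalizationMonoid R] [DecidableEq R]
    [Fintype Rˣ] {a : R} (ha : a ≠ 0) {S : Finset R} (hS : ∀ d ∈ S, d ∣ a) :
    #S ≤ Fintype.card Rˣ *
      ∏ p ∈ (normalizedFactors a).toFinset, ((normalizedFactors a).count p + 1) := by
  have hsub : S ⊆ (univ ×ˢ Iic (normalizedFactors a)).image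
      fun us : Rˣ × Multiset R ↦ us.2.prod * us.1 := by
    intro d hd
    have hd0 : d ≠ 0 := ne_zero_of_dvd_ne_zero ha (hS d hd)
    obtain ⟨u, hu⟩ := prod_normalizedFactors hd0
    exact mem_image.mpr ⟨(u, normalizedFactors d), by
      simpa using (dvd_iff_normalizedFactors_le_normalizedFactors hd0 ha).mp (hS d hd), hu⟩
  calc #S ≤ #(univ ×ˢ Iic (normalizedFactors a) : Finset (Rˣ × Multiset R)) :=
        (card_le_card hsub).trans card_image_le
    _ = _ := by rw [card_product, card_univ, Multiset.card_Iic]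

theorem add_one_le_mul_pow {K y : ℝ} (hK : 1 ≤ K) (hy : 1 ≤ K * (y - 1)) (n : ℕ) :
    (n : ℝ) + 1 ≤ K * y ^ n := by
  have hy1 : 0 ≤ y - 1 := by
    by_contra! h
    nlinarith
  calc (n : ℝ) + 1 ≤ n * (K * (y - 1)) + K := by
        gcongr
        exact le_mul_of_one_le_right n.cast_nonneg hy
    _ = K * (1 + n * (y - 1)) := by ring
    _ ≤ K * y ^ n := by
        gcongr
        simpa using one_add_mul_le_pow (show -2 ≤ y - 1 by linarith) n

theorem prod_count_add_one_le {α : Type*} [DecidableEq α] (s : Multiset α) (F : Finset α)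
    (y : α → ℝ) {K : ℝ} (hK : 1 ≤ K) (hy : ∀ p ∈ s, 1 ≤ K * (y p - 1))
    (hyF : ∀ p ∈ s, p ∉ F → 2 ≤ y p) :
    ∏ p ∈ s.toFinset, ((s.count p : ℝ) + 1) ≤ K ^ #F * (s.map y).prod := by
  have hfactor : ∀ p ∈ s.toFinset,
      (s.count p : ℝ) + 1 ≤ (if p ∈ F then K else 1) * y p ^ s.count p := by
    intro p hp
    rw [Multiset.mem_toFinset] at hp
    split_ifs with hF
    · exact add_one_le_mul_pow hK (hy p hp) _
    · exact add_one_le_mul_pow le_rfl (by linarith [hyF p hp hF]) _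
  have hy0 : ∀ r ∈ s.map y, 0 ≤ r := by
    intro r hr
    obtain ⟨p, hp, rfl⟩ := Multiset.mem_map.mp hr
    nlinarith [hy p hp]
  calc ∏ p ∈ s.toFinset, ((s.count p : ℝ) + 1)
      ≤ ∏ p ∈ s.toFinset, ((if p ∈ F then K else 1) * y p ^ s.count p) :=
        prod_le_prod (fun _ _ ↦ by positivity) hfactor
    _ = K ^ #(s.toFinset ∩ F) * (s.map y).prod := by
        rw [prod_mul_distrib, prod_ite_mem, prod_const, prod_multiset_map_count]
    _ ≤ K ^ #F * (s.map y).prod := by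
        gcongr
        · exact Multiset.prod_nonneg hy0
        · exact inter_subset_right

theorem prod_map_normalizedFactors_rpow [StrongNormalizationMonoid R] (N : R →* ℕ) {a : R}
    (ha : a ≠ 0) (ε : ℝ) :
    ((normalizedFactors a).map fun p ↦ (N p : ℝ) ^ ε).prod = (N a : ℝ) ^ ε := by
  obtain ⟨u, hu⟩ := prod_normalizedFactors ha
  have hNa : N a = ((normalizedFactors a).map N).prod := by
    conv_lhs => rw [← hu, map_mul, Nat.isUnit_iff.mp (u.isUnit.map N), mul_one, map_multiset_prod]
  rw [Real.multiset_prod_map_rpow _ _ fun _ _ ↦ Nat.cast_nonneg _, hNa, Nat.cast_multiset_prod,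
    Multiset.map_map]
  rfl

theorem exists_card_divisors_le_rpow (N : R →* ℕ) [Northcott N] {ε : ℝ} (hε : 0 < ε) :
    ∃ C : ℝ, 1 ≤ C ∧ ∀ a : R, a ≠ 0 → ∀ S : Finset R, (∀ d ∈ S, d ∣ a) →
      (#S : ℝ) ≤ C * (N a : ℝ) ^ ε := by
  classical
  let : StrongNormalizationMonoid R := UniqueFactorizationMonoid.strongNormalizationMonoid
  have : Finite Rˣ := finite_units_of_northcott N
  let : Fintype Rˣ := Fintype.ofFinite Rˣ
  obtain ⟨P, hP⟩ := exists_nat_gt ((2 : ℝ) ^ ε⁻¹)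
  -- A prime with `N p > P` has `N p ^ ε ≥ 2` and so absorbs its factor `count p + 1 ≤ 2 ^ count p`;
  -- only the finitely many elements of `F` cost a constant.
  set F : Finset R := (Northcott.finite_le (h := N) P).toFinset with hF
  have h2ε : 1 < (2 : ℝ) ^ ε := one_lt_rpow one_lt_two hε
  set K : ℝ := max 1 (2 ^ ε - 1)⁻¹
  have hK : 1 ≤ K := le_max_left _ _
  have hK' : 1 ≤ K * ((2 : ℝ) ^ ε - 1) :=
    (inv_le_iff_one_le_mul₀ (sub_pos.mpr h2ε)).mp (le_max_right _ _)
  have hcard : (1 : ℝ) ≤ Fintype.card Rˣ := mod_cast Fintype.card_pos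
  refine ⟨Fintype.card Rˣ * K ^ #F, one_le_mul_of_one_le_of_one_le hcard (one_le_pow₀ hK),
    fun a ha S hS ↦ ?_⟩
  have hsmall : ∀ p ∈ normalizedFactors a, 1 ≤ K * ((N p : ℝ) ^ ε - 1) := by
    intro p hp
    have hp2 : 2 ≤ N p := one_lt_of_northcott N (prime_of_normalized_factor p hp).ne_zero
      (prime_of_normalized_factor p hp).not_isUnit
    refine hK'.trans ?_
    gcongr
    exact_mod_cast hp2
  have hlarge : ∀ p ∈ normalizedFactors a, p ∉ F → 2 ≤ (N p : ℝ) ^ ε := by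
    intro p _ hpF
    have hpP : P < N p := by simpa [hF] using hpF
    rw [← rpow_inv_le_iff_of_pos zero_le_two (Nat.cast_nonneg _) hε]
    exact hP.le.trans (mod_cast hpP.le)
  calc (#S : ℝ) ≤ Fintype.card Rˣ *
        ∏ p ∈ (normalizedFactors a).toFinset, (((normalizedFactors a).count p : ℝ) + 1) :=
        mod_cast card_le_card_units_mul_prod_count_add_one ha hS
    _ ≤ Fintype.card Rˣ * (K ^ #F * (N a : ℝ) ^ ε) := by
        gcongr
        rw [← prod_map_normalizedFactors_rpow N ha]
        exact prod_count_add_one_le _ F _ hK hsmall hlarge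
    _ = Fintype.card Rˣ * K ^ #F * (N a : ℝ) ^ ε := by ring

end DivisorBound

/-! ### Close points on a hyperbola -/

section Hyperbola

variable {R : Type*} [CommRing R]

theorem mul_sq_det_eq_of_mul_eq {M x₁ y₁ x₂ y₂ x₃ y₃ : R} (h₁ : x₁ * y₁ = M) (h₂ : x₂ * y₂ = M)
    (h₃ : x₃ * y₃ = M) :
    M * ((x₂ - x₁) * (y₃ - y₁) - (x₃ - x₁) * (y₂ - y₁)) ^ 2 =
      -((x₂ - x₁) * (x₃ - x₁) * (x₃ - x₂) * ((y₂ - y₁) * (y₃ - y₁) * (y₃ - y₂))) := by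
  grind

theorem ne_of_mul_eq [IsDomain R] {M : R} (hM : M ≠ 0) {p q : R × R} (hp : p.1 * p.2 = M)
    (hq : q.1 * q.2 = M) (hpq : p ≠ q) : p.1 ≠ q.1 ∧ p.2 ≠ q.2 := by
  constructor <;> intro h <;> refine hpq (Prod.ext ?_ ?_)
  · exact h
  · exact mul_left_cancel₀ (left_ne_zero_of_mul (hp.trans_ne hM)) (by rw [hp, h, hq])
  · exact mul_right_cancel₀ (right_ne_zero_of_mul (hp.trans_ne hM)) (by rw [hp, h, hq])
  · exact h

theorem le_pow_six_of_two_lt_card [IsDomain R] [UniqueFactorizationMonoid R] (N : R →* ℕ)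
    [Northcott N] {B : ℝ} {M : R} (hM : M ≠ 0) {S : Finset (R × R)} (hS : ∀ p ∈ S, p.1 * p.2 = M)
    (hfst : ∀ p ∈ S, ∀ q ∈ S, (N (p.1 - q.1) : ℝ) ≤ B)
    (hsnd : ∀ p ∈ S, ∀ q ∈ S, (N (p.2 - q.2) : ℝ) ≤ B) (hcard : 2 < #S) :
    (N M : ℝ) ≤ B ^ 6 := by
  obtain ⟨p, hp, q, hq, r, hr, hpq, hpr, hqr⟩ := two_lt_card.mp hcard
  obtain ⟨hqp₁, hqp₂⟩ := ne_of_mul_eq hM (hS q hq) (hS p hp) hpq.symm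
  obtain ⟨hrp₁, hrp₂⟩ := ne_of_mul_eq hM (hS r hr) (hS p hp) hpr.symm
  obtain ⟨hrq₁, hrq₂⟩ := ne_of_mul_eq hM (hS r hr) (hS q hq) hqr.symm
  have hdet := mul_sq_det_eq_of_mul_eq (hS p hp) (hS q hq) (hS r hr)
  set det := (q.1 - p.1) * (r.2 - p.2) - (r.1 - p.1) * (q.2 - p.2)
  have hdet0 : det ≠ 0 := by
    rintro h
    rw [h] at hdet
    simp_all [sub_eq_zero]
  have hneg : N (-1) = 1 := Nat.isUnit_iff.mp (isUnit_one.neg.map N)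
  have hB : 0 ≤ B := (Nat.cast_nonneg _).trans (hfst p hp p hp)
  calc (N M : ℝ) ≤ N (M * det ^ 2) := by
        rw [map_mul, map_pow]
        exact_mod_cast Nat.le_mul_of_pos_right _ (pow_pos (one_le_of_northcott N hdet0) 2)
    _ = N (q.1 - p.1) * N (r.1 - p.1) * N (r.1 - q.1) *
          (N (q.2 - p.2) * N (r.2 - p.2) * N (r.2 - q.2)) := by
        rw [hdet, neg_eq_neg_one_mul]
        simp only [map_mul, hneg, one_mul, Nat.cast_mul]
    _ ≤ B * B * B * (B * B * B) := by
        gcongr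
        all_goals first | exact hfst _ ‹_› _ ‹_› | exact hsnd _ ‹_› _ ‹_›
    _ = B ^ 6 := by ring

theorem exists_card_hyperbola_le_rpow [IsDomain R] [UniqueFactorizationMonoid R] (N : R →* ℕ)
    [Northcott N] {ε : ℝ} (hε : 0 < ε) :
    ∃ C : ℝ, 1 ≤ C ∧ ∀ B : ℝ, 1 ≤ B → ∀ M : R, M ≠ 0 → ∀ S : Finset (R × R),
      (∀ p ∈ S, p.1 * p.2 = M) → (∀ p ∈ S, ∀ q ∈ S, (N (p.1 - q.1) : ℝ) ≤ B) →
      (∀ p ∈ S, ∀ q ∈ S, (N (p.2 - q.2) : ℝ) ≤ B) → (#S : ℝ) ≤ C * B ^ ε := by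
  classical
  obtain ⟨C, hC, hdiv⟩ := exists_card_divisors_le_rpow N (ε := ε / 6) (by positivity)
  refine ⟨C + 1, by linarith, fun B hB M hM S hS hfst hsnd ↦ ?_⟩
  have hBε : 1 ≤ B ^ ε := one_le_rpow hB hε.le
  obtain hcard | hcard := le_or_gt #S 2
  · calc (#S : ℝ) ≤ (C + 1) * 1 := by
          have : (#S : ℝ) ≤ 2 := mod_cast hcard
          linarith
      _ ≤ (C + 1) * B ^ ε := by gcongr
  have hinj : Set.InjOn Prod.fst (S : Set (R × R)) := fun p hp q hq h ↦
    by_contra fun hpq ↦ (ne_of_mul_eq hM (hS p hp) (hS q hq) hpq).1 h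
  calc (#S : ℝ) = #(S.image Prod.fst) := by rw [card_image_of_injOn hinj]
    _ ≤ C * (N M : ℝ) ^ (ε / 6) := hdiv M hM _ fun d hd ↦ by
        obtain ⟨p, hp, rfl⟩ := mem_image.mp hd
        exact ⟨p.2, (hS p hp).symm⟩
    _ ≤ C * (B ^ 6) ^ (ε / 6) := by
        gcongr
        exact le_pow_six_of_two_lt_card N hM hS hfst hsnd hcard
    _ = C * B ^ ε := by
        rw [← rpow_natCast, ← rpow_mul (by positivity)]
        congr 2
        push_cast
        ring
    _ ≤ (C + 1) * B ^ ε := by gcongr; linarith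

end Hyperbola

/-! ### Lattice points on circles and integral hyperbolas -/

instance northcott_natAbsHom : Northcott (Int.natAbsHom : ℤ →* ℕ) where
  finite_le b := (Set.finite_Icc (-(b : ℤ)) b).subset fun a (ha : a.natAbs ≤ b) ↦ by
    rw [Set.mem_Icc]
    omega

/-- The norm `x² + y²` of the Gaussian integer `x + yi`, as a homomorphism to `ℕ`: divisors are
counted in terms of it when `ℤ²` is identified with `ℤ[i]`. -/
def gaussianNorm : GaussianInt →* ℕ := (Int.natAbsHom : ℤ →* ℕ).comp Zsqrtd.normMonoidHom

theorem gaussianNorm_mk (p : ℤ × ℤ) : (gaussianNorm ⟨p.1, p.2⟩ : ℤ) = nsq p := by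
  simp [gaussianNorm, Zsqrtd.normMonoidHom, nsq, Zsqrtd.norm_def, ← sq, abs_of_nonneg, add_nonneg,
    sq_nonneg]

theorem gaussianNorm_star (z : GaussianInt) : gaussianNorm (star z) = gaussianNorm z :=
  congrArg Int.natAbs (Zsqrtd.norm_conj z)

instance northcott_gaussianNorm : Northcott gaussianNorm where
  finite_le b := by
    refine (((Set.finite_Icc (-(b : ℤ)) b).prod (Set.finite_Icc (-(b : ℤ)) b)).image
      fun p ↦ (⟨p.1, p.2⟩ : GaussianInt)).subset fun z (hz : gaussianNorm z ≤ b) ↦ ?_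
    have hsq : z.re ^ 2 + z.im ^ 2 ≤ b := (gaussianNorm_mk (z.re, z.im)).ge.trans (mod_cast hz)
    have hre := Int.natAbs_le_self_sq z.re
    have him := Int.natAbs_le_self_sq z.im
    refine ⟨(z.re, z.im), Set.mem_prod.mpr ⟨?_, ?_⟩, rfl⟩ <;> rw [Set.mem_Icc] <;> omega

theorem nsq_eq_zero_iff {p : ℤ × ℤ} : nsq p = 0 ↔ p = 0 := by
  rw [nsq, add_eq_zero_iff_of_nonneg (sq_nonneg _) (sq_nonneg _), sq_eq_zero_iff, sq_eq_zero_iff,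
    Prod.ext_iff, Prod.fst_zero, Prod.snd_zero]

theorem exists_card_circle_le_rpow {ε : ℝ} (hε : 0 < ε) :
    ∃ C : ℝ, 1 ≤ C ∧ ∀ B : ℝ, 1 ≤ B → ∀ (D : ℤ) (S : Finset (ℤ × ℤ)), (∀ p ∈ S, nsq p = D) →
      (∀ p ∈ S, ∀ q ∈ S, (nsq (p - q) : ℝ) ≤ B) → (#S : ℝ) ≤ C * B ^ ε := by
  classical
  obtain ⟨C, hC, hcard⟩ := exists_card_hyperbola_le_rpow gaussianNorm hε
  refine ⟨C, hC, fun B hB D S hD hS ↦ ?_⟩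
  obtain rfl | hD0 := eq_or_ne D 0
  · have hzero : ∀ p ∈ S, p = 0 := fun p hp ↦ nsq_eq_zero_iff.mp (hD p hp)
    calc (#S : ℝ) ≤ 1 := mod_cast card_le_one.mpr fun p hp q hq ↦ by rw [hzero p hp, hzero q hq]
      _ ≤ C * B ^ ε := one_le_mul_of_one_le_of_one_le hC (one_le_rpow hB hε.le)
  let z (p : ℤ × ℤ) : GaussianInt := ⟨p.1, p.2⟩
  have hz (p q : ℤ × ℤ) : z p - z q = z (p - q) := rfl
  have hnorm (p : ℤ × ℤ) : (gaussianNorm (z p) : ℝ) = nsq p := mod_cast gaussianNorm_mk p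
  have hinj : Function.Injective fun p ↦ (z p, star (z p)) := fun p q h ↦
    Prod.ext (congrArg (·.1.re) h) (congrArg (·.1.im) h)
  rw [← card_image_of_injective S hinj]
  refine hcard B hB D (mod_cast hD0) _ ?_ ?_ ?_ <;> simp only [forall_mem_image]
  · intro p hp
    rw [← Zsqrtd.norm_eq_mul_conj, ← hD p hp]
    congr 1
    simp only [z, Zsqrtd.norm_def, nsq]
    ring
  · intro p hp q hq
    rw [hz, hnorm]
    exact hS p hp q hq
  · intro p hp q hq
    rw [← star_sub, gaussianNorm_star, hz, hnorm]
    exact hS p hp q hq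

theorem nsq_sub_le {p q : ℤ × ℤ} {r : ℝ} (hp : ‖p‖ ≤ r) (hq : ‖q‖ ≤ r) :
    (nsq (p - q) : ℝ) ≤ 8 * r ^ 2 := by
  have hpq : ‖p - q‖ ≤ 2 * r := (norm_sub_le p q).trans (by linarith)
  have hfst := (norm_fst_le (p - q)).trans hpq
  have hsnd := (norm_snd_le (p - q)).trans hpq
  rw [Int.norm_eq_abs] at hfst hsnd
  rw [nsq, Int.cast_add, Int.cast_pow, Int.cast_pow]
  linarith [sq_le_sq.mpr (hfst.trans (le_abs_self _)), sq_le_sq.mpr (hsnd.trans (le_abs_self _))]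

theorem exists_card_shifted_circle_le_rpow {ε : ℝ} (hε : 0 < ε) :
    ∃ C : ℝ, 1 ≤ C ∧ ∀ r : ℝ, 1 ≤ r → ∀ (c : ℤ × ℤ) (D : ℤ) (S : Finset (ℤ × ℤ)),
      (∀ p ∈ S, ‖p‖ ≤ r) → (∀ p ∈ S, nsq (2 • p - c) = D) → (#S : ℝ) ≤ C * r ^ ε := by
  classical
  obtain ⟨C, hC, hcard⟩ := exists_card_circle_le_rpow (half_pos hε)
  refine ⟨C * 32 ^ (ε / 2), one_le_mul_of_one_le_of_one_le hC
    (one_le_rpow (by norm_num) (by positivity)), fun r hr c D S hSr hSD ↦ ?_⟩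
  have hinj : Function.Injective fun p : ℤ × ℤ ↦ 2 • p - c :=
    (sub_left_injective).comp (nsmul_right_injective two_ne_zero)
  have hdist : ∀ p ∈ S, ∀ q ∈ S, (nsq ((2 • p - c) - (2 • q - c)) : ℝ) ≤ 32 * r ^ 2 := by
    intro p hp q hq
    have hdouble : nsq ((2 • p - c) - (2 • q - c)) = 4 * nsq (p - q) := by
      simp only [nsq, two_nsmul, Prod.fst_add, Prod.snd_add, Prod.fst_sub, Prod.snd_sub]
      ring
    rw [hdouble]
    push_cast
    linarith [nsq_sub_le (hSr p hp) (hSr q hq)]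
  calc (#S : ℝ) = #(S.image fun p ↦ 2 • p - c) := by rw [card_image_of_injective S hinj]
    _ ≤ C * (32 * r ^ 2) ^ (ε / 2) :=
        hcard _ (by nlinarith) D _ (forall_mem_image.mpr hSD)
          (forall_mem_image.mpr fun p hp ↦ forall_mem_image.mpr (hdist p hp))
    _ = C * 32 ^ (ε / 2) * r ^ ε := by
        rw [mul_rpow (by norm_num) (by positivity), ← rpow_natCast, ← rpow_mul (by positivity),
          Nat.cast_two, mul_div_cancel₀ ε two_ne_zero, mul_assoc]

/-- The integers at distance at most `A` from `a`, as a finite set: the range of one coordinate of a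
lattice point confined to a ball. -/
noncomputable def intBall (a : ℤ) (A : ℝ) : Finset ℤ := Finset.Icc ⌈a - A⌉ ⌊a + A⌋

theorem mem_intBall {a x : ℤ} {A : ℝ} : x ∈ intBall a A ↔ ‖x - a‖ ≤ A := by
  rw [intBall, Finset.mem_Icc, Int.ceil_le, Int.le_floor, Int.norm_eq_abs, Int.cast_sub, abs_le,
    neg_le_sub_iff_le_add, sub_le_iff_le_add, sub_le_iff_le_add']

theorem card_intBall_le (a : ℤ) {A : ℝ} (hA : 1 ≤ A) : (#(intBall a A) : ℝ) ≤ 3 * A := by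
  have hceil := Int.le_ceil ((a : ℝ) - A)
  have hfloor := Int.floor_le ((a : ℝ) + A)
  have hnonneg : 0 ≤ ⌊(a : ℝ) + A⌋ + 1 - ⌈(a : ℝ) - A⌉ := by
    have h₁ : a ≤ ⌊(a : ℝ) + A⌋ := Int.le_floor.mpr (by linarith)
    have h₂ : ⌈(a : ℝ) - A⌉ ≤ a := Int.ceil_le.mpr (by linarith)
    linarith
  calc (#(intBall a A) : ℝ) = ((⌊(a : ℝ) + A⌋ + 1 - ⌈(a : ℝ) - A⌉ : ℤ) : ℝ) := by
        rw [intBall, Int.card_Icc, ← Int.cast_natCast, Int.toNat_of_nonneg hnonneg]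
    _ ≤ 3 * A := by
        push_cast
        linarith

theorem card_intBall_product_le (a b : ℤ) {A B : ℝ} (hA : 1 ≤ A) (hB : 1 ≤ B) :
    (#(intBall a A ×ˢ intBall b B) : ℝ) ≤ 9 * (A * B) := by
  calc (#(intBall a A ×ˢ intBall b B) : ℝ) = #(intBall a A) * #(intBall b B) := by
        rw [card_product, Nat.cast_mul]
    _ ≤ 3 * A * (3 * B) := by
        gcongr
        exacts [card_intBall_le a hA, card_intBall_le b hB]
    _ = 9 * (A * B) := by ring

theorem exists_card_int_hyperbola_le_rpow {ε : ℝ} (hε : 0 < ε) :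
    ∃ C : ℝ, 1 ≤ C ∧ ∀ A B : ℝ, 1 ≤ A → 1 ≤ B → ∀ a b M : ℤ, M ≠ 0 → ∀ S : Finset (ℤ × ℤ),
      (∀ p ∈ S, ‖p.1 - a‖ ≤ A) → (∀ p ∈ S, ‖p.2 - b‖ ≤ B) → (∀ p ∈ S, p.1 * p.2 = M) →
      (#S : ℝ) ≤ C * (A * B) ^ ε := by
  obtain ⟨C, hC, hcard⟩ := exists_card_hyperbola_le_rpow (Int.natAbsHom : ℤ →* ℕ) hε
  refine ⟨C * 2 ^ ε, one_le_mul_of_one_le_of_one_le hC (one_le_rpow one_le_two hε.le),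
    fun A B hA hB a b M hM S hSA hSB hS ↦ ?_⟩
  have hdist {x y c : ℤ} {r : ℝ} (hx : ‖x - c‖ ≤ r) (hy : ‖y - c‖ ≤ r) :
      ((x - y).natAbs : ℝ) ≤ 2 * r := by
    rw [Nat.cast_natAbs, Int.cast_abs, ← Int.norm_eq_abs, ← sub_sub_sub_cancel_right x y c]
    linarith [norm_sub_le (x - c) (y - c)]
  rw [mul_assoc, ← mul_rpow zero_le_two (by positivity)]
  refine hcard (2 * (A * B)) (by nlinarith) M hM S hS (fun p hp q hq ↦ ?_) fun p hp q hq ↦ ?_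
  · exact (hdist (hSA p hp) (hSA q hq)).trans (by nlinarith)
  · exact (hdist (hSB p hp) (hSB q hq)).trans (by nlinarith)

/-! ### Pairs of lattice points with prescribed inner product -/

/-- The pairs `(u, v)` of lattice points with `u` and `v` confined to the balls of radii `A` around
`a` and `B` around `b`, and with inner product `u · v = M`. -/
def dotPairs (a b : ℤ × ℤ) (A B : ℝ) (M : ℤ) : Set ((ℤ × ℤ) × (ℤ × ℤ)) :=
  {p | ‖p.1 - a‖ ≤ A ∧ ‖p.2 - b‖ ≤ B ∧ p.1.1 * p.2.1 + p.1.2 * p.2.2 = M}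

theorem map_swap_mem_dotPairs {a b : ℤ × ℤ} {A B : ℝ} {M : ℤ} {p : (ℤ × ℤ) × (ℤ × ℤ)}
    (hp : p ∈ dotPairs a b A B M) :
    p.map Prod.swap Prod.swap ∈ dotPairs a.swap b.swap A B M :=
  ⟨(max_comm _ _).trans_le hp.1, (max_comm _ _).trans_le hp.2.1, (add_comm _ _).trans hp.2.2⟩

theorem exists_card_dotPairs_le_rpow_of_mul_ne_zero {ε : ℝ} (hε : 0 < ε) :
    ∃ C : ℝ, 1 ≤ C ∧ ∀ A B : ℝ, 1 ≤ A → 1 ≤ B → ∀ (a b : ℤ × ℤ) (M : ℤ)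
      (S : Finset ((ℤ × ℤ) × (ℤ × ℤ))), ↑S ⊆ dotPairs a b A B M →
      (∀ p ∈ S, p.1.2 * p.2.2 ≠ 0) → (#S : ℝ) ≤ C * (A * B) ^ (1 + ε) := by
  obtain ⟨C, hC, hcard⟩ := exists_card_int_hyperbola_le_rpow hε
  refine ⟨9 * C, by linarith, fun A B hA hB a b M S hS hne ↦ ?_⟩
  have hbox : ∀ p ∈ S, (p.1.1, p.2.1) ∈ intBall a.1 A ×ˢ intBall b.1 B := fun p hp ↦
    mem_product.mpr ⟨mem_intBall.mpr ((norm_fst_le (p.1 - a)).trans (hS hp).1),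
      mem_intBall.mpr ((norm_fst_le (p.2 - b)).trans (hS hp).2.1)⟩
  have hfiber : ∀ c : ℤ × ℤ, ∀ T : Finset (ℤ × ℤ),
      (∀ q ∈ T, ∃ p ∈ S, (p.1.1, p.2.1) = c ∧ (p.1.2, p.2.2) = q) →
        (#T : ℝ) ≤ C * (A * B) ^ ε := by
    intro c T hT
    obtain rfl | ⟨q₀, hq₀⟩ := T.eq_empty_or_nonempty
    · rw [card_empty, Nat.cast_zero]
      positivity
    have hM : ∀ q ∈ T, q.1 * q.2 = M - c.1 * c.2 ∧ q.1 * q.2 ≠ 0 := by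
      intro q hq
      obtain ⟨p, hp, rfl, rfl⟩ := hT q hq
      exact ⟨eq_sub_of_add_eq' (hS hp).2.2, hne p hp⟩
    refine hcard A B hA hB a.2 b.2 (M - c.1 * c.2) ((hM q₀ hq₀).1 ▸ (hM q₀ hq₀).2) T
      (fun q hq ↦ ?_) (fun q hq ↦ ?_) fun q hq ↦ (hM q hq).1
    all_goals obtain ⟨p, hp, -, rfl⟩ := hT q hq
    · exact (norm_snd_le (p.1 - a)).trans (hS hp).1
    · exact (norm_snd_le (p.2 - b)).trans (hS hp).2.1
  calc (#S : ℝ) ≤ #(intBall a.1 A ×ˢ intBall b.1 B) * (C * (A * B) ^ ε) :=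
        card_le_card_mul_of_fiber hbox (fun p _ q _ h₁ h₂ ↦ by grind) hfiber
    _ ≤ 9 * (A * B) * (C * (A * B) ^ ε) := by
        gcongr
        exact card_intBall_product_le _ _ hA hB
    _ = 9 * C * (A * B) ^ (1 + ε) := by
        rw [rpow_add (by positivity), rpow_one]
        ring

theorem card_dotPairs_le_of_eq_zero {A B : ℝ} (hA : 1 ≤ A) (hB : 1 ≤ B) {a b : ℤ × ℤ} {M : ℤ}
    {S : Finset ((ℤ × ℤ) × (ℤ × ℤ))} (hS : ↑S ⊆ dotPairs a b A B M)
    (h0 : ∀ p ∈ S, p.1.1 = 0 ∧ p.2.2 = 0) : (#S : ℝ) ≤ 9 * (A * B) := by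
  refine le_trans (mod_cast card_le_card_of_injOn (fun p ↦ (p.1.2, p.2.1)) (fun p hp ↦ ?_)
    fun p hp q hq h ↦ ?_) (card_intBall_product_le a.2 b.1 hA hB)
  · exact mem_product.mpr ⟨mem_intBall.mpr ((norm_snd_le (p.1 - a)).trans (hS hp).1),
      mem_intBall.mpr ((norm_fst_le (p.2 - b)).trans (hS hp).2.1)⟩
  · have := h0 p hp
    have := h0 q hq
    grind

theorem exists_card_dotPairs_le_rpow_of_mul_ne_zero_or {ε : ℝ} (hε : 0 < ε) :
    ∃ C : ℝ, 1 ≤ C ∧ ∀ A B : ℝ, 1 ≤ A → 1 ≤ B → ∀ (a b : ℤ × ℤ) (M : ℤ)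
      (S : Finset ((ℤ × ℤ) × (ℤ × ℤ))), ↑S ⊆ dotPairs a b A B M →
      (∀ p ∈ S, p.1.2 * p.2.2 ≠ 0 ∨ p.1.1 = 0 ∧ p.2.2 = 0) →
      (#S : ℝ) ≤ C * (A * B) ^ (1 + ε) := by
  classical
  obtain ⟨C, hC, hcard⟩ := exists_card_dotPairs_le_rpow_of_mul_ne_zero hε
  refine ⟨C + 9, by linarith, fun A B hA hB a b M S hS hne ↦ ?_⟩
  have hAB : A * B ≤ (A * B) ^ (1 + ε) :=
    self_le_rpow_of_one_le (one_le_mul_of_one_le_of_one_le hA hB) (by linarith)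
  have hcover : #S ≤ #{p ∈ S | p.1.2 * p.2.2 ≠ 0} + #{p ∈ S | p.1.1 = 0 ∧ p.2.2 = 0} := by
    conv_lhs => rw [← filter_true_of_mem hne, filter_or]
    exact card_union_le _ _
  have hne_card : (#{p ∈ S | p.1.2 * p.2.2 ≠ 0} : ℝ) ≤ C * (A * B) ^ (1 + ε) :=
    hcard A B hA hB a b M _ (fun p hp ↦ hS (mem_filter.mp hp).1) fun p hp ↦ (mem_filter.mp hp).2
  have hzero_card : (#{p ∈ S | p.1.1 = 0 ∧ p.2.2 = 0} : ℝ) ≤ 9 * (A * B) :=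
    card_dotPairs_le_of_eq_zero hA hB (fun p hp ↦ hS (mem_filter.mp hp).1)
      fun p hp ↦ (mem_filter.mp hp).2
  calc (#S : ℝ) ≤ #{p ∈ S | p.1.2 * p.2.2 ≠ 0} + #{p ∈ S | p.1.1 = 0 ∧ p.2.2 = 0} :=
        mod_cast hcover
    _ ≤ (C + 9) * (A * B) ^ (1 + ε) := by linarith

theorem exists_card_dotPairs_le_rpow {ε : ℝ} (hε : 0 < ε) :
    ∃ C : ℝ, 1 ≤ C ∧ ∀ A B : ℝ, 1 ≤ A → 1 ≤ B → ∀ (a b : ℤ × ℤ) (M : ℤ)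
      (S : Finset ((ℤ × ℤ) × (ℤ × ℤ))), ↑S ⊆ dotPairs a b A B M →
      (∀ p ∈ S, p.1 ≠ 0 ∧ p.2 ≠ 0) → (#S : ℝ) ≤ C * (A * B) ^ (1 + ε) := by
  classical
  obtain ⟨C, hC, hcard⟩ := exists_card_dotPairs_le_rpow_of_mul_ne_zero_or hε
  refine ⟨2 * C, by linarith, fun A B hA hB a b M S hS hne ↦ ?_⟩
  let swap : (ℤ × ℤ) × (ℤ × ℤ) → (ℤ × ℤ) × (ℤ × ℤ) := Prod.map Prod.swap Prod.swap
  have hswap : Function.Injective swap := Prod.swap_injective.prodMap Prod.swap_injective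
  -- Nonzero `u` and `v` with `u₁ v₁ = u₂ v₂ = 0` lie on different coordinate axes.
  let P (p : (ℤ × ℤ) × (ℤ × ℤ)) : Prop := p.1.2 * p.2.2 ≠ 0 ∨ p.1.1 = 0 ∧ p.2.2 = 0
  have hcover : #S ≤ #{p ∈ S | P p} + #{p ∈ S | P (swap p)} := by
    refine (card_le_card fun p hp ↦ ?_).trans (card_union_le _ _)
    have := hne p hp
    simp only [P, swap, Prod.map, Prod.fst_swap, Prod.snd_swap, mem_union, mem_filter, hp,
      Prod.ext_iff, ne_eq, mul_eq_zero, true_and, Prod.fst_zero, Prod.snd_zero] at *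
    tauto
  have hP : (#{p ∈ S | P p} : ℝ) ≤ C * (A * B) ^ (1 + ε) :=
    hcard A B hA hB a b M _ (fun p hp ↦ hS (mem_filter.mp hp).1) fun p hp ↦ (mem_filter.mp hp).2
  have hPswap : (#{p ∈ S | P (swap p)} : ℝ) ≤ C * (A * B) ^ (1 + ε) := by
    rw [← card_image_of_injective _ hswap]
    refine hcard A B hA hB a.swap b.swap M _ ?_ ?_
    · rw [coe_image, Set.image_subset_iff]
      exact fun p hp ↦ map_swap_mem_dotPairs (hS (mem_filter.mp hp).1)
    · exact forall_mem_image.mpr fun p hp ↦ (mem_filter.mp hp).2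
  calc (#S : ℝ) ≤ #{p ∈ S | P p} + #{p ∈ S | P (swap p)} := mod_cast hcover
    _ ≤ 2 * C * (A * B) ^ (1 + ε) := by linarith

/-! ### Admissible triples -/

section AdmissibleTriples

/-- The triples `t = (n, n₂, n₃)` for which `(n, n₁, n₂, n₃)` satisfies the equations and
non-degeneracy conditions defining the base tensor, with `n, n₂, n₃` in balls of radii `N, N₂, N₃`.
The radii are measured in the sup norm of `ℤ × ℤ`, and `|n_j| ∼ N_j` is relaxed to `|n_j| ≤ N_j`. -/
structure IsAdmissible (N N₂ N₃ : ℝ) (m : ℤ) (n₁ : ℤ × ℤ) (t : (ℤ × ℤ) × (ℤ × ℤ) × (ℤ × ℤ)) :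
    Prop where
  norm_le : ‖t.1‖ ≤ N
  norm_le₂ : ‖t.2.1‖ ≤ N₂
  norm_le₃ : ‖t.2.2‖ ≤ N₃
  eq_add : t.1 = n₁ - t.2.1 + t.2.2
  ne₁ : t.1 ≠ n₁
  ne₃ : t.1 ≠ t.2.2
  phi_eq : phiFn t.1 n₁ t.2.1 t.2.2 = m

namespace IsAdmissible

variable {N N₂ N₃ : ℝ} {m : ℤ} {n₁ : ℤ × ℤ} {t s : (ℤ × ℤ) × (ℤ × ℤ) × (ℤ × ℤ)}

theorem swap (h : IsAdmissible N N₂ N₃ m n₁ t) :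
    IsAdmissible N₂ N N₃ m n₁ (t.2.1, t.1, t.2.2) where
  norm_le := h.norm_le₂
  norm_le₂ := h.norm_le
  norm_le₃ := h.norm_le₃
  eq_add := by
    rw [h.eq_add]
    abel
  ne₁ heq := h.ne₃ (by simpa [show t.2.1 = n₁ from heq] using h.eq_add)
  ne₃ heq := h.ne₁ (by simpa [show t.2.1 = t.2.2 from heq] using h.eq_add)
  phi_eq := by
    rw [← h.phi_eq]
    simp only [phiFn]
    ring

theorem eq_sub (h : IsAdmissible N N₂ N₃ m n₁ t) : t.2.1 = n₁ - t.1 + t.2.2 := h.swap.eq_add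

theorem two_mul_dot_eq (h : IsAdmissible N N₂ N₃ m n₁ t) :
    2 * ((t.1 - n₁).1 * (t.1 - t.2.2).1 + (t.1 - n₁).2 * (t.1 - t.2.2).2) = m := by
  rw [← h.phi_eq, h.eq_sub]
  simp only [phiFn, nsq, Prod.fst_add, Prod.snd_add, Prod.fst_sub, Prod.snd_sub]
  ring

theorem nsq_two_nsmul_sub (h : IsAdmissible N N₂ N₃ m n₁ t) :
    nsq (2 • t.1 - (n₁ + t.2.2)) = 2 * m + nsq (n₁ - t.2.2) := by
  rw [← h.two_mul_dot_eq]
  simp only [nsq, two_nsmul, Prod.fst_add, Prod.snd_add, Prod.fst_sub, Prod.snd_sub]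
  ring

theorem ext_fst_thd (ht : IsAdmissible N N₂ N₃ m n₁ t) (hs : IsAdmissible N N₂ N₃ m n₁ s)
    (h₁ : t.1 = s.1) (h₃ : t.2.2 = s.2.2) : t = s :=
  Prod.ext h₁ (Prod.ext (by rw [ht.eq_sub, hs.eq_sub, h₁, h₃]) h₃)

end IsAdmissible

variable {ε : ℝ}

theorem exists_card_admissible_le_sq_mul_rpow (hε : 0 < ε) :
    ∃ C : ℝ, 1 ≤ C ∧ ∀ N N₂ N₃ : ℝ, 1 ≤ N → 1 ≤ N₃ → ∀ (m : ℤ) (n₁ : ℤ × ℤ)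
      (S : Finset ((ℤ × ℤ) × (ℤ × ℤ) × (ℤ × ℤ))), (∀ t ∈ S, IsAdmissible N N₂ N₃ m n₁ t) →
      (#S : ℝ) ≤ C * (N₃ ^ 2 * N ^ ε) := by
  obtain ⟨C, hC, hcard⟩ := exists_card_shifted_circle_le_rpow hε
  refine ⟨9 * C, by linarith, fun N N₂ N₃ hN hN₃ m n₁ S hS ↦ ?_⟩
  have hbox : ∀ t ∈ S, t.2.2 ∈ intBall 0 N₃ ×ˢ intBall 0 N₃ := fun t ht ↦ by
    rw [mem_product, mem_intBall, mem_intBall, sub_zero, sub_zero]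
    exact norm_prod_le_iff.mp (hS t ht).norm_le₃
  have hfiber : ∀ n₃ : ℤ × ℤ, ∀ T : Finset (ℤ × ℤ), (∀ n ∈ T, ∃ t ∈ S, t.2.2 = n₃ ∧ t.1 = n) →
      (#T : ℝ) ≤ C * N ^ ε := by
    refine fun n₃ T hT ↦ hcard N hN (n₁ + n₃) (2 * m + nsq (n₁ - n₃)) T
      (fun n hn ↦ ?_) fun n hn ↦ ?_
    all_goals obtain ⟨t, ht, rfl, rfl⟩ := hT n hn
    · exact (hS t ht).norm_le
    · exact (hS t ht).nsq_two_nsmul_sub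
  calc (#S : ℝ) ≤ #(intBall 0 N₃ ×ˢ intBall 0 N₃) * (C * N ^ ε) :=
        card_le_card_mul_of_fiber hbox
          (fun t ht s hs h₃ h₁ ↦ (hS t ht).ext_fst_thd (hS s hs) h₁ h₃) hfiber
    _ ≤ 9 * (N₃ * N₃) * (C * N ^ ε) := by
        gcongr
        exact card_intBall_product_le _ _ hN₃ hN₃
    _ = 9 * C * (N₃ ^ 2 * N ^ ε) := by ring

theorem exists_card_admissible_le_of_norm_le (hε : 0 < ε) :
    ∃ C : ℝ, 1 ≤ C ∧ ∀ N N₂ N₃ A : ℝ, 1 ≤ N → 1 ≤ A → ∀ (m : ℤ) (n₁ c : ℤ × ℤ)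
      (S : Finset ((ℤ × ℤ) × (ℤ × ℤ) × (ℤ × ℤ))), (∀ t ∈ S, IsAdmissible N N₂ N₃ m n₁ t) →
      (∀ t ∈ S, ‖t.1 - t.2.2 - c‖ ≤ A) → (#S : ℝ) ≤ C * (N * A) ^ (1 + ε) := by
  classical
  obtain ⟨C, hC, hcard⟩ := exists_card_dotPairs_le_rpow hε
  refine ⟨C, hC, fun N N₂ N₃ A hN hA m n₁ c S hS hSA ↦ ?_⟩
  let pair (t : (ℤ × ℤ) × (ℤ × ℤ) × (ℤ × ℤ)) : (ℤ × ℤ) × (ℤ × ℤ) := (t.1 - n₁, t.1 - t.2.2)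
  have hinj : Set.InjOn pair S := fun t ht s hs h ↦ by
    have h₁ : t.1 = s.1 := sub_left_injective (congrArg Prod.fst h)
    have h₃ : t.1 - t.2.2 = s.1 - s.2.2 := congrArg Prod.snd h
    rw [h₁] at h₃
    exact (hS t ht).ext_fst_thd (hS s hs) h₁ (sub_right_injective h₃)
  rw [← card_image_of_injOn hinj]
  refine hcard N A hN hA (-n₁) c (m / 2) _ ?_ (forall_mem_image.mpr fun t ht ↦ ?_)
  · rw [coe_image, Set.image_subset_iff]
    refine fun t ht ↦ ⟨?_, hSA t ht, ?_⟩
    · simpa [pair] using (hS t ht).norm_le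
    · exact Int.eq_ediv_of_mul_eq_right two_ne_zero (hS t ht).two_mul_dot_eq
  · exact ⟨sub_ne_zero.mpr (hS t ht).ne₁, sub_ne_zero.mpr (hS t ht).ne₃⟩

theorem exists_card_admissible_le_mul_rpow_fst_snd (hε : 0 < ε) :
    ∃ C : ℝ, 1 ≤ C ∧ ∀ N N₂ N₃ : ℝ, 1 ≤ N → 1 ≤ N₂ → ∀ (m : ℤ) (n₁ : ℤ × ℤ)
      (S : Finset ((ℤ × ℤ) × (ℤ × ℤ) × (ℤ × ℤ))), (∀ t ∈ S, IsAdmissible N N₂ N₃ m n₁ t) →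
      (#S : ℝ) ≤ C * (N * N₂) ^ (1 + ε) := by
  obtain ⟨C, hC, hcard⟩ := exists_card_admissible_le_of_norm_le hε
  refine ⟨C, hC, fun N N₂ N₃ hN hN₂ m n₁ S hS ↦
    hcard N N₂ N₃ N₂ hN hN₂ m n₁ n₁ S hS fun t ht ↦ ?_⟩
  have heq : t.1 - t.2.2 - n₁ = -t.2.1 := by
    rw [(hS t ht).eq_sub]
    abel
  rw [heq, norm_neg]
  exact (hS t ht).norm_le₂

theorem exists_card_admissible_le_mul_rpow_fst_thd (hε : 0 < ε) :
    ∃ C : ℝ, 1 ≤ C ∧ ∀ N N₂ N₃ : ℝ, 1 ≤ N → 1 ≤ N₃ → ∀ (m : ℤ) (n₁ : ℤ × ℤ)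
      (S : Finset ((ℤ × ℤ) × (ℤ × ℤ) × (ℤ × ℤ))), (∀ t ∈ S, IsAdmissible N N₂ N₃ m n₁ t) →
      (#S : ℝ) ≤ C * (N * N₃) ^ (1 + ε) := by
  obtain ⟨C, hC, hcirc⟩ := exists_card_admissible_le_sq_mul_rpow hε
  obtain ⟨C', hC', hdot⟩ := exists_card_admissible_le_of_norm_le hε
  have h2 : 1 ≤ (2 : ℝ) ^ (1 + ε) := one_le_rpow one_le_two (by linarith)
  refine ⟨C + C' * 2 ^ (1 + ε), by nlinarith, fun N N₂ N₃ hN hN₃ m n₁ S hS ↦ ?_⟩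
  obtain hle | hlt := le_or_gt N₃ N
  · calc (#S : ℝ) ≤ C * (N₃ ^ 2 * N ^ ε) := hcirc N N₂ N₃ hN hN₃ m n₁ S hS
      _ ≤ C * (N * N₃ * (N * N₃) ^ ε) := by
          gcongr
          · nlinarith
          · exact le_mul_of_one_le_right (by linarith) hN₃
      _ = C * (N * N₃) ^ (1 + ε) := by rw [rpow_one_add' (by positivity) (by positivity)]
      _ ≤ (C + C' * 2 ^ (1 + ε)) * (N * N₃) ^ (1 + ε) := by
          gcongr
          nlinarith
  · have hnorm : ∀ t ∈ S, ‖t.1 - t.2.2 - 0‖ ≤ 2 * N₃ := fun t ht ↦ by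
      rw [sub_zero]
      linarith [norm_sub_le t.1 t.2.2, (hS t ht).norm_le, (hS t ht).norm_le₃]
    calc (#S : ℝ) ≤ C' * (N * (2 * N₃)) ^ (1 + ε) :=
          hdot N N₂ N₃ _ hN (by linarith) m n₁ 0 S hS hnorm
      _ = C' * 2 ^ (1 + ε) * (N * N₃) ^ (1 + ε) := by
          rw [mul_left_comm, mul_rpow zero_le_two (by positivity), mul_assoc]
      _ ≤ (C + C' * 2 ^ (1 + ε)) * (N * N₃) ^ (1 + ε) := by
          gcongr
          linarith

/-- The bound on the operator norm of the base tensor, up to a constant depending on `ε`; its square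
bounds the number of admissible triples. -/
noncomputable def tensorBound (ε N N₂ N₃ : ℝ) : ℝ :=
  min (min (N₃ * (min N N₂) ^ ε) ((N * N₂) ^ ((1 : ℝ) / 2 + ε)))
    (min ((N * N₃) ^ ((1 : ℝ) / 2 + ε)) ((N₂ * N₃) ^ ((1 : ℝ) / 2 + ε)))

theorem tensorBound_nonneg {N N₂ N₃ : ℝ} (hN : 0 ≤ N) (hN₂ : 0 ≤ N₂) (hN₃ : 0 ≤ N₃) :
    0 ≤ tensorBound ε N N₂ N₃ := by
  rw [tensorBound]
  positivity

theorem le_mul_sq_tensorBound {C x N N₂ N₃ : ℝ} (hN : 0 ≤ N) (hN₂ : 0 ≤ N₂) (hN₃ : 0 ≤ N₃)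
    (h₁ : x ≤ C * (N₃ ^ 2 * N ^ (2 * ε))) (h₂ : x ≤ C * (N₃ ^ 2 * N₂ ^ (2 * ε)))
    (h₃ : x ≤ C * (N * N₂) ^ (1 + 2 * ε)) (h₄ : x ≤ C * (N * N₃) ^ (1 + 2 * ε))
    (h₅ : x ≤ C * (N₂ * N₃) ^ (1 + 2 * ε)) : x ≤ C * tensorBound ε N N₂ N₃ ^ 2 := by
  have hsq {y : ℝ} (hy : 0 ≤ y) (s : ℝ) : (y ^ s) ^ 2 = y ^ (2 * s) := by
    rw [← rpow_mul_natCast hy, Nat.cast_two, mul_comm]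
  have hexp : 1 + 2 * ε = 2 * (1 / 2 + ε) := by ring
  rw [hexp, ← hsq (by positivity)] at h₃ h₄ h₅
  rw [← hsq (by positivity), ← mul_pow] at h₁ h₂
  have hmin {a b : ℝ} (ha : x ≤ C * a ^ 2) (hb : x ≤ C * b ^ 2) : x ≤ C * min a b ^ 2 := by
    obtain h | h := min_choice a b <;> rwa [h]
  refine hmin (hmin ?_ h₃) (hmin h₄ h₅)
  obtain h | h := min_choice N N₂ <;> rwa [h]

theorem exists_card_admissible_le_sq_tensorBound (hε : 0 < ε) :
    ∃ C : ℝ, 1 ≤ C ∧ ∀ N N₂ N₃ : ℝ, 1 ≤ N → 1 ≤ N₂ → 1 ≤ N₃ → ∀ (m : ℤ) (n₁ : ℤ × ℤ)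
      (S : Finset ((ℤ × ℤ) × (ℤ × ℤ) × (ℤ × ℤ))), (∀ t ∈ S, IsAdmissible N N₂ N₃ m n₁ t) →
      (#S : ℝ) ≤ C * tensorBound ε N N₂ N₃ ^ 2 := by
  classical
  obtain ⟨C₁, hC₁, h₁⟩ := exists_card_admissible_le_sq_mul_rpow (mul_pos two_pos hε)
  obtain ⟨C₂, hC₂, h₂⟩ := exists_card_admissible_le_mul_rpow_fst_snd (mul_pos two_pos hε)
  obtain ⟨C₃, hC₃, h₃⟩ := exists_card_admissible_le_mul_rpow_fst_thd (mul_pos two_pos hε)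
  refine ⟨C₁ + C₂ + C₃, by linarith, fun N N₂ N₃ hN hN₂ hN₃ m n₁ S hS ↦ ?_⟩
  let swap (t : (ℤ × ℤ) × (ℤ × ℤ) × (ℤ × ℤ)) : (ℤ × ℤ) × (ℤ × ℤ) × (ℤ × ℤ) := (t.2.1, t.1, t.2.2)
  have hswap : Function.Injective swap := fun t s h ↦ by grind
  have hS' : ∀ t ∈ S.image swap, IsAdmissible N₂ N N₃ m n₁ t :=
    forall_mem_image.mpr fun t ht ↦ (hS t ht).swap
  have hcard : #(S.image swap) = #S := card_image_of_injective S hswap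
  have h₁' := h₁ N₂ N N₃ hN₂ hN₃ m n₁ _ hS'
  have h₃' := h₃ N₂ N N₃ hN₂ hN₃ m n₁ _ hS'
  rw [hcard] at h₁' h₃'
  have hmono {c y : ℝ} (hc : c ≤ C₁ + C₂ + C₃) (hy : 0 ≤ y) (h : (#S : ℝ) ≤ c * y) :
      (#S : ℝ) ≤ (C₁ + C₂ + C₃) * y := h.trans (mul_le_mul_of_nonneg_right hc hy)
  exact le_mul_sq_tensorBound (by positivity) (by positivity) (by positivity)
    (hmono (by linarith) (by positivity) (h₁ N N₂ N₃ hN hN₃ m n₁ S hS))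
    (hmono (by linarith) (by positivity) h₁')
    (hmono (by linarith) (by positivity) (h₂ N N₂ N₃ hN hN₂ m n₁ S hS))
    (hmono (by linarith) (by positivity) (h₃ N N₂ N₃ hN hN₃ m n₁ S hS))
    (hmono (by linarith) (by positivity) h₃')

end AdmissibleTriples

/-! ### The base tensor -/

section BaseTensor

variable {N N₁ N₂ N₃ : ℝ} {m : ℤ}

theorem norm_le_of_simDyadic {n : ℤ × ℤ} (h : simDyadic N n) : ‖n‖ ≤ N := by
  have hznorm : znorm n ≤ N := by
    obtain ⟨rfl, h⟩ | ⟨-, -, h⟩ := h <;> exact h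
  refine le_trans (norm_prod_le_iff.mpr ⟨?_, ?_⟩) hznorm <;> rw [Int.norm_eq_abs, znorm]
  · exact abs_le_sqrt (le_add_of_nonneg_right (sq_nonneg _))
  · exact abs_le_sqrt (le_add_of_nonneg_left (sq_nonneg _))

theorem SMem.isAdmissible {t : (ℤ × ℤ) × (ℤ × ℤ) × (ℤ × ℤ)} {n₁ : ℤ × ℤ}
    (h : SMem N N₁ N₂ N₃ m t.1 n₁ t.2.1 t.2.2) : IsAdmissible N N₂ N₃ m n₁ t := by
  obtain ⟨heq, hne₁, hne₃, hphi, hn, -, hn₂, hn₃⟩ := h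
  exact ⟨norm_le_of_simDyadic hn, norm_le_of_simDyadic hn₂, norm_le_of_simDyadic hn₃, heq, hne₁,
    hne₃, hphi⟩

theorem hten_ne_zero_iff {n n₁ n₂ n₃ : ℤ × ℤ} :
    hten N N₁ N₂ N₃ m n n₁ n₂ n₃ ≠ 0 ↔ SMem N N₁ N₂ N₃ m n n₁ n₂ n₃ := by
  simp [hten]

theorem eq_of_hten_ne_zero {n n₁ n₁' n₂ n₃ : ℤ × ℤ} (h : hten N N₁ N₂ N₃ m n n₁ n₂ n₃ ≠ 0)
    (h' : hten N N₁ N₂ N₃ m n n₁' n₂ n₃ ≠ 0) : n₁ = n₁' := by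
  have heq := (hten_ne_zero_iff.mp h).1.symm.trans (hten_ne_zero_iff.mp h').1
  exact sub_left_injective (add_right_cancel heq)

theorem sum_sq_hten_eq_card (n₁ : ℤ × ℤ) (T : Finset ((ℤ × ℤ) × (ℤ × ℤ) × (ℤ × ℤ)))
    [DecidablePred fun t : (ℤ × ℤ) × (ℤ × ℤ) × (ℤ × ℤ) ↦ SMem N N₁ N₂ N₃ m t.1 n₁ t.2.1 t.2.2] :
    ∑ t ∈ T, hten N N₁ N₂ N₃ m t.1 n₁ t.2.1 t.2.2 ^ 2 =
      #{t ∈ T | SMem N N₁ N₂ N₃ m t.1 n₁ t.2.1 t.2.2} := by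
  rw [card_filter, Nat.cast_sum]
  refine sum_congr rfl fun t _ ↦ ?_
  by_cases h : SMem N N₁ N₂ N₃ m t.1 n₁ t.2.1 t.2.2 <;> simp [hten, h]

end BaseTensor

theorem stmt13_general (ε : ℝ) (hε : 0 < ε) :
    ∃ C : ℝ, 0 < C ∧ ∀ N N₁ N₂ N₃ : ℝ, 1 ≤ N → 1 ≤ N₂ → 1 ≤ N₃ → ∀ m : ℤ,
      ∀ f : ℤ × ℤ → ℝ, Summable (fun x => f x ^ 2) →
        Real.sqrt (∑' t : (ℤ × ℤ) × (ℤ × ℤ) × (ℤ × ℤ),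
            (∑' n₁ : ℤ × ℤ, hten N N₁ N₂ N₃ m t.1 n₁ t.2.1 t.2.2 * f n₁) ^ 2) ≤
          C * tensorBound ε N N₂ N₃ * Real.sqrt (∑' x : ℤ × ℤ, f x ^ 2) := by
  classical
  obtain ⟨C, hC, hcard⟩ := exists_card_admissible_le_sq_tensorBound hε
  refine ⟨√C, by positivity, fun N N₁ N₂ N₃ hN hN₂ hN₃ m f hf ↦ ?_⟩
  have hbound : 0 ≤ tensorBound ε N N₂ N₃ :=
    tensorBound_nonneg (by positivity) (by positivity) (by positivity)
  refine sqrt_tsum_sq_le_of_row_unique (fun (t : (ℤ × ℤ) × (ℤ × ℤ) × (ℤ × ℤ)) n₁ ↦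
    hten N N₁ N₂ N₃ m t.1 n₁ t.2.1 t.2.2) (fun t n₁ n₁' ↦ eq_of_hten_ne_zero) (by positivity)
    (fun n₁ T ↦ ?_) hf
  rw [mul_pow, sq_sqrt (by positivity), sum_sq_hten_eq_card]
  exact hcard N N₂ N₃ hN hN₂ hN₃ m n₁ _ fun t ht ↦ SMem.isAdmissible (mem_filter.mp ht).2

theorem IsDyadic.one_le {N : ℝ} (h : IsDyadic N) : 1 ≤ N := by
  obtain ⟨k, rfl⟩ := h
  exact one_le_pow₀ one_le_two

theorem stmt13 (ε : ℝ) (hε : 0 < ε) :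
    ∃ C : ℝ, 0 < C ∧ ∀ N N₁ N₂ N₃ : ℝ,
      IsDyadic N → IsDyadic N₁ → IsDyadic N₂ → IsDyadic N₃ → ∀ m : ℤ,
      ∀ f : ℤ × ℤ → ℝ, Summable (fun x => f x ^ 2) →
        Real.sqrt (∑' t : (ℤ × ℤ) × (ℤ × ℤ) × (ℤ × ℤ),
            (∑' n₁ : ℤ × ℤ, hten N N₁ N₂ N₃ m t.1 n₁ t.2.1 t.2.2 * f n₁) ^ 2) ≤
          C * min (min (N₃ * (min N N₂) ^ ε) ((N * N₂) ^ ((1 : ℝ) / 2 + ε)))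
                  (min ((N * N₃) ^ ((1 : ℝ) / 2 + ε)) ((N₂ * N₃) ^ ((1 : ℝ) / 2 + ε))) *
            Real.sqrt (∑' x : ℤ × ℤ, f x ^ 2) := by
  obtain ⟨C, hC, hbound⟩ := stmt13_general ε hε
  exact ⟨C, hC, fun N N₁ N₂ N₃ hN _ hN₂ hN₃ ↦ hbound N N₁ N₂ N₃ hN.one_le hN₂.one_le hN₃.one_le⟩
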